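/- Let ω, ξ : ℤ → ℝ, let σ ∈ ℝ with 0 < σ ≤ 1, |ω(j)| ≤ σ for all j, and |ξ(j)| ≤ (1/2)(|ω(j)| − ω(j)²) for all j. Let μ > 0 and set Re = σ/μ; assume σ ≤ Re/(Re + 4). Define a(j) = ω(j) + ξ(j), C⁺(j) = (1/2)(|a(j)| − a(j)) + μ and C⁻(j) = (1/2)(|a(j)| + a(j)) + μ. Then for every j one has C⁺(j) ≥ 0, C⁻(j) ≥ 0 and C⁺(j) + C⁻(j) ≤ 1. Consequently, for any grid function u : ℤ → ℝ with summable differences, the scheme w(j) = u(j) + C⁺(j)(u(j+1) − u(j)) − C⁻(j−1)(u(j) − u(j−1)) satisfies ∑_{j∈ℤ} |w(j+1) − w(j)| ≤ ∑_{j∈ℤ} |u(j+1) − u(j)|. -/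

import Mathlib

/-!
In Harten's incremental form the new difference `Δ w j` is a combination of `Δ u j`, `Δ u (j + h)`
and `Δ u (j - h)` with weights `1 - Cp j - Cm j`, `Cp (j + h)` and `Cm (j - h)`. When all of them
are nonnegative, the triangle inequality and translation invariance of the sum over the grid
distribute each `‖Δ u j‖` with total weight `(1 - Cp j - Cm j) + Cp j + Cm j = 1`, so total
variation cannot grow. For Bihari's scheme `Cp + Cm = |a| + 2 * μ`; the limiter bound gives
`|a| ≤ (1 + |ω|) / 2`, and the CFL condition says exactly that `σ + 4 * μ ≤ 1`, so that
`Cp + Cm ≤ 1`.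
-/

section IncrementalScheme

open scoped ENNReal fwdDiff

variable {G R E : Type*} [AddCommGroup G]

/-- The total variation of a grid function whose neighbouring grid points differ by `h`. It takes
values in `[0, ∞]`, so that it is meaningful without assuming that the differences are summable. -/
noncomputable def gridVariation [NormedAddCommGroup E] (h : G) (u : G → E) : ℝ≥0∞ :=
  ∑' j, ‖Δ_[h] u j‖ₑ

/-- One time step of a scheme in Harten's incremental form. The coefficient `Cm j` belongs to the
cell interface between `j` and `j + h`, as does `Cp j`, whence the shifted index of `Cm`. -/
def incrementalStep [Ring R] [AddCommGroup E] [Module R E] (h : G) (Cp Cm : G → R) (u : G → E) :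
    G → E :=
  fun j => u j + Cp j • (u (j + h) - u j) - Cm (j - h) • (u j - u (j - h))

theorem fwdDiff_incrementalStep [Ring R] [AddCommGroup E] [Module R E] (h : G) (Cp Cm : G → R)
    (u : G → E) (j : G) :
    Δ_[h] (incrementalStep h Cp Cm u) j =
      (1 - Cp j - Cm j) • Δ_[h] u j + Cp (j + h) • Δ_[h] u (j + h)
        + Cm (j - h) • Δ_[h] u (j - h) := by
  simp only [fwdDiff, incrementalStep, add_sub_cancel_right, sub_add_cancel, sub_smul, one_smul]
  abel

theorem tsum_norm_fwdDiff_eq_toReal_gridVariation [NormedAddCommGroup E] (h : G) (u : G → E) :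
    ∑' j, ‖Δ_[h] u j‖ = (gridVariation h u).toReal := by
  simp only [gridVariation, ENNReal.tsum_toReal_eq fun _ => enorm_ne_top, toReal_enorm]

theorem tsum_norm_fwdDiff_le_of_gridVariation_le [NormedAddCommGroup E] {h : G} {u w : G → E}
    (hu : Summable fun j => ‖Δ_[h] u j‖) (hwu : gridVariation h w ≤ gridVariation h u) :
    ∑' j, ‖Δ_[h] w j‖ ≤ ∑' j, ‖Δ_[h] u j‖ := by
  simp only [tsum_norm_fwdDiff_eq_toReal_gridVariation]
  exact ENNReal.toReal_mono (tsum_enorm_ne_top_iff_summable_norm.mpr hu) hwu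

variable [NormedAddCommGroup E] [NormedSpace ℝ E] {h : G} {Cp Cm : G → ℝ}

theorem gridVariation_incrementalStep_le (hCp : ∀ j, 0 ≤ Cp j) (hCm : ∀ j, 0 ≤ Cm j)
    (hC : ∀ j, Cp j + Cm j ≤ 1) (u : G → E) :
    gridVariation h (incrementalStep h Cp Cm u) ≤ gridVariation h u := by
  have weights_sum (j : G) : ‖1 - Cp j - Cm j‖ₑ + ‖Cp j‖ₑ + ‖Cm j‖ₑ = 1 := by
    have hrest : 0 ≤ 1 - Cp j - Cm j := by linarith [hC j]
    rw [Real.enorm_of_nonneg hrest, Real.enorm_of_nonneg (hCp j), Real.enorm_of_nonneg (hCm j),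
      ← ENNReal.ofReal_add hrest (hCp j), ← ENNReal.ofReal_add (add_nonneg hrest (hCp j)) (hCm j),
      sub_right_comm, sub_add_cancel, sub_add_cancel, ENNReal.ofReal_one]
  have shift_right : ∑' j, ‖Cp (j + h)‖ₑ * ‖Δ_[h] u (j + h)‖ₑ = ∑' j, ‖Cp j‖ₑ * ‖Δ_[h] u j‖ₑ :=
    (Equiv.addRight h).tsum_eq fun j => ‖Cp j‖ₑ * ‖Δ_[h] u j‖ₑ
  have shift_left : ∑' j, ‖Cm (j - h)‖ₑ * ‖Δ_[h] u (j - h)‖ₑ = ∑' j, ‖Cm j‖ₑ * ‖Δ_[h] u j‖ₑ :=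
    (Equiv.subRight h).tsum_eq fun j => ‖Cm j‖ₑ * ‖Δ_[h] u j‖ₑ
  calc gridVariation h (incrementalStep h Cp Cm u)
      ≤ ∑' j, (‖1 - Cp j - Cm j‖ₑ * ‖Δ_[h] u j‖ₑ + ‖Cp (j + h)‖ₑ * ‖Δ_[h] u (j + h)‖ₑ
          + ‖Cm (j - h)‖ₑ * ‖Δ_[h] u (j - h)‖ₑ) := by
        refine ENNReal.tsum_le_tsum fun j => ?_
        simp only [fwdDiff_incrementalStep, ← enorm_smul]
        exact enorm_add₃_le
    _ = ∑' j, (‖1 - Cp j - Cm j‖ₑ + ‖Cp j‖ₑ + ‖Cm j‖ₑ) * ‖Δ_[h] u j‖ₑ := by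
        simp only [add_mul, ENNReal.tsum_add, shift_right, shift_left]
    _ = gridVariation h u := by simp only [weights_sum, one_mul, gridVariation]

end IncrementalScheme

section CourantNumber

variable {𝕜 : Type*} [Field 𝕜] [LinearOrder 𝕜] [IsStrictOrderedRing 𝕜]

theorem le_div_div_div_add_iff {σ μ c : 𝕜} (hσ : 0 < σ) (hμ : 0 < μ) (hc : 0 ≤ c) :
    σ ≤ (σ / μ) / (σ / μ + c) ↔ σ + c * μ ≤ 1 := by
  have hpos : 0 < σ + c * μ := by positivity
  rw [div_add' _ _ _ hμ.ne', div_div_div_cancel_right₀ hμ.ne', le_div_iff₀ hpos,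
    mul_le_iff_le_one_right hσ]

theorem abs_add_le_of_abs_le_limiter {ω ξ : 𝕜} (hξ : |ξ| ≤ (1 / 2) * (|ω| - ω ^ 2)) :
    |ω + ξ| ≤ (1 + |ω|) / 2 := by
  have hsq : 0 ≤ (1 - |ω|) ^ 2 := sq_nonneg _
  rw [← sq_abs ω] at hξ
  linarith [abs_add_le ω ξ]

end CourantNumber

/-- The condition `|ω j| + 4 * μ j ≤ 1` is the local form of `σ ≤ Re / (Re + 4)`; it stays
meaningful in the inviscid case `μ j = 0`, where `Re` would be infinite. -/
theorem bihari_tvd_general {G E : Type*} [AddCommGroup G] [NormedAddCommGroup E]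
    [NormedSpace ℝ E] (h : G) {ω ξ μ a Cp Cm : G → ℝ}
    (hξ : ∀ j, |ξ j| ≤ (1 / 2) * (|ω j| - (ω j) ^ 2))
    (hμ : ∀ j, 0 ≤ μ j)
    (hcfl : ∀ j, |ω j| + 4 * μ j ≤ 1)
    (ha : ∀ j, a j = ω j + ξ j)
    (hCp : ∀ j, Cp j = (1 / 2) * (|a j| - a j) + μ j)
    (hCm : ∀ j, Cm j = (1 / 2) * (|a j| + a j) + μ j) :
    (∀ j, 0 ≤ Cp j ∧ 0 ≤ Cm j ∧ Cp j + Cm j ≤ 1) ∧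
      ∀ u : G → E, gridVariation h (incrementalStep h Cp Cm u) ≤ gridVariation h u := by
  have hCp_nonneg (j : G) : 0 ≤ Cp j := by linarith [hCp j, hμ j, le_abs_self (a j)]
  have hCm_nonneg (j : G) : 0 ≤ Cm j := by linarith [hCm j, hμ j, neg_abs_le (a j)]
  have hsum (j : G) : Cp j + Cm j ≤ 1 := by
    have ha_le : |a j| ≤ (1 + |ω j|) / 2 := ha j ▸ abs_add_le_of_abs_le_limiter (hξ j)
    linarith [hCp j, hCm j, hcfl j]
  exact ⟨fun j => ⟨hCp_nonneg j, hCm_nonneg j, hsum j⟩,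
    gridVariation_incrementalStep_le hCp_nonneg hCm_nonneg hsum⟩

/-- Bihari's TVD theorem for the second-order scheme for a viscous conservation law:
under Harten's second-order limiter bound and the CFL condition `σ ≤ Re/(Re+4)`
with `Re = σ/μ`, the incremental coefficients are nonnegative with sum at most 1,
and consequently the scheme is total-variation diminishing. -/
theorem bihari_tvd (ω ξ : ℤ → ℝ) (σ μ : ℝ)
    (hσ0 : 0 < σ) (hσ1 : σ ≤ 1)
    (hω : ∀ j : ℤ, |ω j| ≤ σ)
    (hξ : ∀ j : ℤ, |ξ j| ≤ (1 / 2) * (|ω j| - (ω j) ^ 2))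
    (hμ : 0 < μ)
    (hcfl : σ ≤ (σ / μ) / (σ / μ + 4))
    (a Cp Cm : ℤ → ℝ)
    (ha : ∀ j : ℤ, a j = ω j + ξ j)
    (hCp : ∀ j : ℤ, Cp j = (1 / 2) * (|a j| - a j) + μ)
    (hCm : ∀ j : ℤ, Cm j = (1 / 2) * (|a j| + a j) + μ) :
    (∀ j : ℤ, 0 ≤ Cp j ∧ 0 ≤ Cm j ∧ Cp j + Cm j ≤ 1) ∧
      ∀ u w : ℤ → ℝ, Summable (fun j : ℤ => |u (j + 1) - u j|) →
        (∀ j : ℤ, w j = u j + Cp j * (u (j + 1) - u j) - Cm (j - 1) * (u j - u (j - 1))) →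
        (∑' j : ℤ, |w (j + 1) - w j|) ≤ ∑' j : ℤ, |u (j + 1) - u j| := by
  have hlocal (j : ℤ) : |ω j| + 4 * μ ≤ 1 := by
    linarith [hω j, (le_div_div_div_add_iff hσ0 hμ zero_le_four).mp hcfl]
  obtain ⟨hC, htv⟩ :=
    bihari_tvd_general (E := ℝ) 1 (μ := fun _ => μ) hξ (fun _ => hμ.le) hlocal ha hCp hCm
  refine ⟨hC, fun u w hu hw => ?_⟩
  obtain rfl : w = incrementalStep 1 Cp Cm u := funext hw
  exact tsum_norm_fwdDiff_le_of_gridVariation_le (u := u) hu (htv u)
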